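/- arXiv:math/0205064 — 3 statements merged into one kernel-verified Lean document; each statement's English description precedes it below -/
import Mathlib

section
/- Let z1 ≠ z2 be complex numbers, m1, m2 ≥ 1 natural numbers, and let g1 be analytic at z1 and g2 be analytic at z2. Then for every n ≥ 0, (1/(z2−z1)) · [ T1 + T2 ] = −Σ_{k=0}^{m1−n−2} k!·C(m1−n−2,k)·C(n,k)·(z1−z2)^{n−k−1}·g1^{(m1−n−k−2)}(z1)/(m1−n−2)! + Σ_{k=0}^{m2−n−1} k!·C(m2−n−1,k)·C(n+1,k)·(z2−z1)^{n−k}·g2^{(m2−n−k−1)}(z2)/(m2−n−1)!, where T1 = (1/(m1−n−2)!) · D^{m1−n−2}( w ↦ (w−z2)^{n}·g1(w) )(z1) if n ≤ m1−2 and T1 = 0 otherwise, and T2 = (1/(m2−n−1)!) · D^{m2−n−1}( w ↦ (w−z1)^{n+1}·g2(w) )(z2) if n ≤ m2−1 and T2 = 0 otherwise; sums whose upper limit is negative are understood as zero. -/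
/-!
Each residue is a Taylor coefficient of `(w - b) ^ p • g w` at `a`, where `{a, b} = {z1, z2}`.
The Leibniz rule expands it, since the derivatives of `(w - b) ^ p` at `a` are explicit, and
dividing by `a - b` lowers every exponent of `a - b` by one. The residue at `z1` is divided by
`z2 - z1 = -(a - b)`, whence the minus sign in front of the first sum.
-/

section PoleResidue

open Finset
open scoped Nat

variable {𝕜 F : Type*} [NontriviallyNormedField 𝕜] [NormedAddCommGroup F] [NormedSpace 𝕜 F]

/-- The residue at `a` of `w ↦ (w - a)⁻ᵐ • h w` for `h` regular at `a`, that is, the Taylor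
coefficient of `h` at `a` of index `m - 1`. It is `0` for `m = 0`, where there is no pole, and has
this meaning in characteristic zero only: elsewhere `(m - 1)!` may vanish in `𝕜`. -/
noncomputable def poleResidue (m : ℕ) (h : 𝕜 → F) (a : 𝕜) : F :=
  if 0 < m then (1 / ((m - 1)! : 𝕜)) • iteratedDeriv (m - 1) h a else 0

lemma iteratedDeriv_sub_const_pow (p k : ℕ) (a b : 𝕜) :
    iteratedDeriv k (fun w => (w - b) ^ p) a = p.descFactorial k * (a - b) ^ (p - k) := by
  simp [iteratedDeriv_comp_sub_const k (fun w : 𝕜 => w ^ p) b]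

lemma choose_mul_pow_sub_eq_choose_mul_zpow {K : Type*} [DivisionRing K] (x : K)
    (p k : ℕ) : (p.choose k : K) * x ^ (p - k) = p.choose k * x ^ ((p : ℤ) - k) := by
  rcases le_or_gt k p with hkp | hpk
  · rw [← Nat.cast_sub hkp, zpow_natCast]
  · simp [Nat.choose_eq_zero_of_lt hpk]

lemma iteratedDeriv_fun_smul {𝔸 : Type*} [NormedRing 𝔸] [NormedAlgebra 𝕜 𝔸] [Module 𝔸 F]
    [IsBoundedSMul 𝔸 F] [IsScalarTower 𝕜 𝔸 F] {N : ℕ} {f : 𝕜 → 𝔸} {g : 𝕜 → F} {a : 𝕜}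
    (hf : ContDiffAt 𝕜 N f a) (hg : ContDiffAt 𝕜 N g a) :
    iteratedDeriv N (fun w => f w • g w) a =
      ∑ k ∈ range (N + 1), N.choose k • iteratedDeriv k f a • iteratedDeriv (N - k) g a := by
  simpa only [iteratedDerivWithin_univ, Pi.smul_def'] using
    iteratedDerivWithin_smul (Set.mem_univ a) uniqueDiffOn_univ
      hf.contDiffWithinAt hg.contDiffWithinAt

lemma iteratedDeriv_sub_const_pow_smul {a : 𝕜} (b : 𝕜) {N : ℕ} (p : ℕ) {g : 𝕜 → F}
    (hg : ContDiffAt 𝕜 N g a) :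
    iteratedDeriv N (fun w => (w - b) ^ p • g w) a =
      ∑ k ∈ range (N + 1),
        (k ! * N.choose k * p.choose k * (a - b) ^ ((p : ℤ) - k)) •
          iteratedDeriv (N - k) g a := by
  have hpow : ContDiffAt 𝕜 N (fun w : 𝕜 => (w - b) ^ p) a := by fun_prop
  rw [iteratedDeriv_fun_smul hpow hg]
  refine sum_congr rfl fun k _ => ?_
  rw [iteratedDeriv_sub_const_pow, Nat.descFactorial_eq_factorial_mul_choose, Nat.cast_mul,
    mul_assoc, choose_mul_pow_sub_eq_choose_mul_zpow,
    ← Nat.cast_smul_eq_nsmul 𝕜, smul_smul]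
  congr 1
  ring

lemma inv_sub_smul_poleResidue_sub_const_pow_smul {a b : 𝕜} (hab : a ≠ b) {m : ℕ} (p : ℕ)
    {g : 𝕜 → F} (hg : ContDiffAt 𝕜 (m - 1 : ℕ) g a) :
    (a - b)⁻¹ • poleResidue m (fun w => (w - b) ^ p • g w) a =
      ∑ k ∈ range m,
        (k ! * (m - 1).choose k * p.choose k * (a - b) ^ ((p : ℤ) - k - 1) / (m - 1)!) •
          iteratedDeriv (m - 1 - k) g a := by
  rcases m with - | N
  · simp [poleResidue]
  · rw [poleResidue, if_pos N.succ_pos, iteratedDeriv_sub_const_pow_smul b p hg,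
      Nat.add_sub_cancel, smul_smul, smul_sum]
    refine sum_congr rfl fun k _ => ?_
    rw [smul_smul, zpow_sub_one₀ (sub_ne_zero.mpr hab)]
    congr 1
    ring

theorem twoPointLaurentC_eq_residue_sum_general [CharZero 𝕜] {z1 z2 : 𝕜} (h12 : z1 ≠ z2)
    (m1 m2 n : ℕ) {g1 g2 : 𝕜 → F} (hg1 : ContDiffAt 𝕜 (m1 - n - 2 : ℕ) g1 z1)
    (hg2 : ContDiffAt 𝕜 (m2 - n - 1 : ℕ) g2 z2) :
    (1 / (z2 - z1)) •
      (poleResidue (m1 - n - 1) (fun w => (w - z2) ^ n • g1 w) z1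
        + poleResidue (m2 - n) (fun w => (w - z1) ^ (n + 1) • g2 w) z2)
    = -(∑ k ∈ range (m1 - n - 1),
        (k ! * (m1 - n - 2).choose k * n.choose k * (z1 - z2) ^ ((n : ℤ) - k - 1) /
          (m1 - n - 2)!) • iteratedDeriv (m1 - n - k - 2) g1 z1)
      + ∑ k ∈ range (m2 - n),
        (k ! * (m2 - n - 1).choose k * (n + 1).choose k * (z2 - z1) ^ ((n : ℤ) - k) /
          (m2 - n - 1)!) • iteratedDeriv (m2 - n - k - 1) g2 z2 := by
  have residue_z1 := inv_sub_smul_poleResidue_sub_const_pow_smul h12 (m := m1 - n - 1) n hg1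
  have residue_z2 := inv_sub_smul_poleResidue_sub_const_pow_smul h12.symm (n + 1) hg2
  have inv_sub_swap : 1 / (z2 - z1) = -(z1 - z2)⁻¹ := by rw [one_div, ← inv_neg, neg_sub]
  have exponent (k : ℕ) : ((n + 1 : ℕ) : ℤ) - k - 1 = n - k := by push_cast; ring
  rw [smul_add]
  congr 1
  · rw [inv_sub_swap, neg_smul, residue_z1]
    simp only [Nat.sub_sub (m1 - n) 1 1, Nat.reduceAdd, Nat.sub_right_comm]
  · rw [one_div, residue_z2]
    simp only [exponent, Nat.sub_right_comm]

end PoleResidue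

/-- Explicit formula for the two-point Laurent coefficient `c_n(z1,z2)`:
the sum of the residues at `z1` and `z2` of `(w−z1)^{n+1}(w−z2)^n f(w)` (with
`(w−z1)^{m1} f = g1` near `z1`, `(w−z2)^{m2} f = g2` near `z2`), divided by `(z2−z1)`,
equals the explicit finite double sum; empty sums (negative upper limit) are zero. -/
theorem twoPointLaurentC_eq_residue_sum
    (z1 z2 : ℂ) (h12 : z1 ≠ z2) (m1 m2 : ℕ) (hm1 : 1 ≤ m1) (hm2 : 1 ≤ m2)
    (g1 g2 : ℂ → ℂ) (hg1 : AnalyticAt ℂ g1 z1) (hg2 : AnalyticAt ℂ g2 z2)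
    (n : ℕ) :
    (1 / (z2 - z1)) *
      ((if n + 2 ≤ m1 then
          (1 / (Nat.factorial (m1 - n - 2) : ℂ)) *
            iteratedDeriv (m1 - n - 2) (fun w => (w - z2) ^ n * g1 w) z1
        else 0)
      + (if n + 1 ≤ m2 then
          (1 / (Nat.factorial (m2 - n - 1) : ℂ)) *
            iteratedDeriv (m2 - n - 1) (fun w => (w - z1) ^ (n + 1) * g2 w) z2
        else 0))
    = -(∑ k ∈ Finset.range (m1 - n - 1),
        (Nat.factorial k : ℂ) * (Nat.choose (m1 - n - 2) k : ℂ) * (Nat.choose n k : ℂ) *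
          (z1 - z2) ^ ((n : ℤ) - k - 1) *
          iteratedDeriv (m1 - n - k - 2) g1 z1 / (Nat.factorial (m1 - n - 2) : ℂ))
      + (∑ k ∈ Finset.range (m2 - n),
        (Nat.factorial k : ℂ) * (Nat.choose (m2 - n - 1) k : ℂ) * (Nat.choose (n + 1) k : ℂ) *
          (z2 - z1) ^ ((n : ℤ) - k) *
          iteratedDeriv (m2 - n - k - 1) g2 z2 / (Nat.factorial (m2 - n - 1) : ℂ)) := by
  simpa only [poleResidue, Nat.sub_pos_iff_lt, Nat.succ_le_iff, smul_eq_mul, Nat.sub_sub,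
    Nat.reduceAdd, div_mul_eq_mul_div, add_assoc] using
    twoPointLaurentC_eq_residue_sum_general h12 m1 m2 n hg1.contDiffAt hg2.contDiffAt
end

section
/- Let z1 ≠ z2 be complex numbers, m ≥ 1 a natural number, let g be analytic at z1, and suppose f(z) := g(z)/(z−z1)^m is analytic at z2. Then for every n ≥ 1, (1/(z2−z1)) · [ (1/(n+m−1)!)·D^{n+m−1}( w ↦ g(w)/(w−z2)^{n+1} )(z1) + (1/n!)·D^{n}( w ↦ f(w)/(w−z1)^{n} )(z2) ] = −((−1)^n/n!)·[ Σ_{k=0}^{m+n−1} ((n+k)!/(k!(m+n−k−1)!))·g^{(m+n−k−1)}(z1)/(z2−z1)^{n+k+2} + n·Σ_{k=0}^{n} ((n+k−1)!/(k!(n−k)!))·f^{(n−k)}(z2)/(z1−z2)^{n+k+1} ]. -/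
/-!
The two residues have the same shape: the `N`-th Taylor coefficient at `a` of `h(w)/(w-b)^{p+1}`,
with `(a, b, p) = (z1, z2, n)` and `(z2, z1, n-1)` respectively. The Leibniz rule writes it as a
finite sum over the derivatives of `h` at `a`, because `D^k (w-b)^{-p}` is a multiple of
`(w-b)^{-p-k}`. The prefactor `1/(z2-z1)` then only raises every exponent by one, at the cost of a
sign for the residue at `z2`.
-/

open Finset
open scoped Nat

lemma prod_range_neg_natCast_sub {R : Type*} [CommRing R] (p k : ℕ) :
    ∏ i ∈ range k, (-(p : R) - i) = (-1) ^ k * (p.ascFactorial k : R) := by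
  have neg_factor (i : ℕ) : -(p : R) - i = -1 * ((p + i : ℕ) : R) := by push_cast; ring
  simp_rw [neg_factor, prod_mul_distrib, prod_const, card_range, Nat.ascFactorial_eq_prod_range,
    Nat.cast_prod]

lemma one_div_mul_sum_div_pow {ι K : Type*} [Semifield K] (s : Finset ι) (c : ι → K) (e : ι → ℕ)
    (d : K) :
    1 / d * ∑ k ∈ s, c k / d ^ e k = ∑ k ∈ s, c k / d ^ (e k + 1) := by
  simp_rw [mul_sum, pow_succ', div_mul_div_comm, one_mul]

section

variable {𝕜 : Type*} [NontriviallyNormedField 𝕜]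

lemma iteratedDeriv_inv_sub_pow (p k : ℕ) (a z : 𝕜) :
    iteratedDeriv k (fun w => ((w - a) ^ p)⁻¹) z
      = (-1) ^ k * (p.ascFactorial k : 𝕜) / (z - a) ^ (p + k) := by
  have as_zpow : (fun w : 𝕜 => ((w - a) ^ p)⁻¹) = fun w => (w - a) ^ (-p : ℤ) := by
    simp only [zpow_neg, zpow_natCast]
  have exponent : (-p - k : ℤ) = -((p + k : ℕ) : ℤ) := by push_cast; ring
  rw [as_zpow, iteratedDeriv_comp_sub_const k (fun w : 𝕜 => w ^ (-p : ℤ)) a,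
    iteratedDeriv_eq_iterate]
  beta_reduce
  rw [iter_deriv_zpow, exponent, zpow_neg, zpow_natCast, div_eq_mul_inv,
    ← prod_range_neg_natCast_sub, Int.cast_neg, Int.cast_natCast]

lemma iteratedDeriv_div_sub_pow (p N : ℕ) {a z : 𝕜} (hz : z ≠ a) {h : 𝕜 → 𝕜}
    (hh : ContDiffAt 𝕜 N h z) :
    iteratedDeriv N (fun w => h w / (w - a) ^ p) z
      = ∑ k ∈ range (N + 1), (N.choose k : 𝕜) *
          ((-1) ^ k * (p.ascFactorial k : 𝕜) / (z - a) ^ (p + k)) * iteratedDeriv (N - k) h z := by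
  have inv_contDiffAt : ContDiffAt 𝕜 N (fun w => ((w - a) ^ p)⁻¹) z :=
    ContDiffAt.inv (by fun_prop) (pow_ne_zero p (sub_ne_zero.mpr hz))
  simp_rw [div_eq_inv_mul (h _), iteratedDeriv_fun_mul inv_contDiffAt hh,
    iteratedDeriv_inv_sub_pow]

variable [CharZero 𝕜]

lemma inv_factorial_mul_iteratedDeriv_div_sub_pow_succ (p N : ℕ) {a b : 𝕜} (hab : a ≠ b)
    {h : 𝕜 → 𝕜} (hh : ContDiffAt 𝕜 N h a) :
    1 / (N ! : 𝕜) * iteratedDeriv N (fun w => h w / (w - b) ^ (p + 1)) a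
      = (-1) ^ (p + 1) / (p ! : 𝕜) * ∑ k ∈ range (N + 1),
          ((p + k)! : 𝕜) / ((k ! : 𝕜) * ((N - k)! : 𝕜)) * iteratedDeriv (N - k) h a
            / (b - a) ^ (p + k + 1) := by
  rw [iteratedDeriv_div_sub_pow (p + 1) N hab hh, mul_sum, mul_sum]
  refine sum_congr rfl fun k hk => ?_
  have factorial_ne (j : ℕ) : (j ! : 𝕜) ≠ 0 := Nat.cast_ne_zero.mpr j.factorial_ne_zero
  have hba : b - a ≠ 0 := sub_ne_zero.mpr hab.symm
  have flip_base : (a - b) ^ (p + 1 + k) = (-1) ^ (p + 1) * (-1) ^ k * (b - a) ^ (p + k + 1) := by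
    rw [← neg_sub, neg_pow]; ring
  have sign_sq : ((-1 : 𝕜) ^ (p + 1)) ^ 2 = 1 := by rw [pow_right_comm, neg_one_sq, one_pow]
  rw [flip_base, Nat.cast_choose 𝕜 (mem_range_succ_iff.mp hk), ← Nat.factorial_mul_ascFactorial,
    Nat.cast_mul]
  field_simp [factorial_ne, hba]
  rw [sign_sq, mul_one]

theorem taylorLaurentD_eq_residue_sum_general {z1 z2 : 𝕜} (h12 : z1 ≠ z2) (m : ℕ) {g : 𝕜 → 𝕜}
    {n : ℕ} (hn : 1 ≤ n) (hg : ContDiffAt 𝕜 (n + m - 1 : ℕ) g z1)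
    (hf : ContDiffAt 𝕜 n (fun w => g w / (w - z1) ^ m) z2) :
    1 / (z2 - z1) *
      (1 / ((n + m - 1)! : 𝕜) *
          iteratedDeriv (n + m - 1) (fun w => g w / (w - z2) ^ (n + 1)) z1
        + 1 / (n ! : 𝕜) *
          iteratedDeriv n (fun w => g w / (w - z1) ^ m / (w - z1) ^ n) z2)
    = -((-1) ^ n / (n ! : 𝕜)) *
        ((∑ k ∈ range (m + n),
            ((n + k)! : 𝕜) / ((k ! : 𝕜) * ((m + n - k - 1)! : 𝕜)) *
              iteratedDeriv (m + n - k - 1) g z1 / (z2 - z1) ^ (n + k + 2))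
          + (n : 𝕜) * ∑ k ∈ range (n + 1),
            ((n + k - 1)! : 𝕜) / ((k ! : 𝕜) * ((n - k)! : 𝕜)) *
              iteratedDeriv (n - k) (fun w => g w / (w - z1) ^ m) z2
                / (z1 - z2) ^ (n + k + 1)) := by
  obtain ⟨q, rfl⟩ : ∃ q, n = q + 1 := Nat.exists_eq_add_of_le' hn
  have order_succ : q + 1 + m - 1 + 1 = m + (q + 1) := by lia
  have order_sub (k : ℕ) : q + 1 + m - 1 - k = m + (q + 1) - k - 1 := by lia
  have shift (k : ℕ) : q + 1 + k = q + k + 1 := by lia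
  have coeff : (-1) ^ (q + 1) / (q ! : 𝕜) = (-1) ^ (q + 1) / ((q + 1)! : 𝕜) * (q + 1 : ℕ) := by
    rw [Nat.factorial_succ, Nat.cast_mul]
    field_simp
  have neg_prefactor : 1 / (z2 - z1) = -(1 / (z1 - z2)) := by
    rw [← neg_sub, one_div_neg_eq_neg_one_div]
  rw [inv_factorial_mul_iteratedDeriv_div_sub_pow_succ (q + 1) _ h12 hg,
    inv_factorial_mul_iteratedDeriv_div_sub_pow_succ q _ h12.symm hf, mul_add, mul_left_comm,
    one_div_mul_sum_div_pow, neg_prefactor, neg_mul, mul_left_comm, one_div_mul_sum_div_pow, coeff]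
  simp only [order_succ, order_sub]
  simp only [shift, Nat.add_sub_cancel]
  ring

end

/-- Explicit formula for the Taylor–Laurent coefficient `d_n(z1,z2)`, `n ≥ 1`:
the sum of the residues at `z1` and `z2` of `f(w)(w−z1)^{−n}(w−z2)^{−n−1}` for
`f = g/(w−z1)^m`, divided by `(z2−z1)`, equals the explicit finite double sum. -/
theorem taylorLaurentD_eq_residue_sum
    (z1 z2 : ℂ) (h12 : z1 ≠ z2) (m : ℕ) (hm : 1 ≤ m)
    (g : ℂ → ℂ) (hg : AnalyticAt ℂ g z1)
    (f : ℂ → ℂ) (hfdef : ∀ w, f w = g w / (w - z1) ^ m)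
    (hf2 : AnalyticAt ℂ f z2)
    (n : ℕ) (hn : 1 ≤ n) :
    (1 / (z2 - z1)) *
      ((1 / (Nat.factorial (n + m - 1) : ℂ)) *
          iteratedDeriv (n + m - 1) (fun w => g w / (w - z2) ^ (n + 1)) z1
        + (1 / (Nat.factorial n : ℂ)) *
          iteratedDeriv n (fun w => f w / (w - z1) ^ n) z2)
    = -((-1 : ℂ) ^ n / (Nat.factorial n : ℂ)) *
        ((∑ k ∈ Finset.range (m + n),
            ((Nat.factorial (n + k) : ℂ) /
                ((Nat.factorial k : ℂ) * (Nat.factorial (m + n - k - 1) : ℂ))) *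
              iteratedDeriv (m + n - k - 1) g z1 / (z2 - z1) ^ (n + k + 2))
          + (n : ℂ) * ∑ k ∈ Finset.range (n + 1),
            ((Nat.factorial (n + k - 1) : ℂ) /
                ((Nat.factorial k : ℂ) * (Nat.factorial (n - k) : ℂ))) *
              iteratedDeriv (n - k) f z2 / (z1 - z2) ^ (n + k + 1)) := by
  obtain rfl : f = fun w => g w / (w - z1) ^ m := funext hfdef
  exact taylorLaurentD_eq_residue_sum_general h12 m hn hg.contDiffAt hf2.contDiffAt
end

section
/- Let Ω ⊆ ℂ be open, z1, z2 ∈ Ω with z1 ≠ z2, m ≥ 1 a natural number, let g : ℂ → ℂ be analytic on Ω, and define f(z) = g(z)/(z−z1)^m on Ω \ {z1}. Define G(z) = f(z) − Σ_{n=0}^{m−1} e_n(z1,z2)·(z−z1)^{−n−1}·(z−z2)^{n} on Ω \ {z1}, with e_n as below. Then G extends to a function analytic on all of Ω (the singularity of G at z1 is removable). -/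
/-- The Taylor–Laurent coefficient `e_n(z1,z2)`. -/
noncomputable def taylorLaurentE (g : ℂ → ℂ) (z1 z2 : ℂ) (m : ℕ) (n : ℕ) : ℂ :=
  ((-1 : ℂ) ^ n / (Nat.factorial n : ℂ)) *
    ∑ k ∈ Finset.range (m - n),
      ((Nat.factorial (n + k) : ℂ) /
          ((Nat.factorial k : ℂ) * (Nat.factorial (m - n - k - 1) : ℂ))) *
        iteratedDeriv (m - n - k - 1) g z1 / (z2 - z1) ^ (n + k)

/-!
Iterating the divided difference `g ↦ dslope g z1` `m` times gives a function `R`, as differentiable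
as `g`, with `g w = T w + (w - z1) ^ m * R w`, where `T` is the Taylor polynomial of `g` at `z1` of
degree less than `m`. So `R` is the extension sought once the subtracted sum is identified with
`T w / (w - z1) ^ m`. With `u = w - z1` and `v = w - z2`, so that `u - v = z2 - z1`, the binomial
theorem gives
`u ^ (-p - 1) = (u - v) ^ (-p) * ∑ n ≤ p, (-1) ^ n * p.choose n * u ^ (-n - 1) * v ^ n`,
and the `e_n` are what one collects after expanding in this way each pole of `T w / (w - z1) ^ m`.
-/

open Finset Function Topology

section IterateDSlope

variable {𝕜 E : Type*} [NontriviallyNormedField 𝕜] [NormedAddCommGroup E] [NormedSpace 𝕜 E]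

theorem eq_sum_add_pow_smul_iterate_dslope (f : 𝕜 → E) (a b : 𝕜) (m : ℕ) :
    f b = ∑ j ∈ range m, (b - a) ^ j • (swap dslope a)^[j] f a +
      (b - a) ^ m • (swap dslope a)^[m] f b := by
  induction m with
  | zero => simp
  | succ m ih =>
    have remainder_step : (b - a) • (swap dslope a)^[m + 1] f b =
        (swap dslope a)^[m] f b - (swap dslope a)^[m] f a := by
      rw [iterate_succ_apply']
      exact sub_smul_dslope _ a b
    rw [sum_range_succ, pow_succ, mul_smul, remainder_step, smul_sub, add_assoc,
      add_sub_cancel]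
    exact ih

theorem factorial_smul_iterate_dslope_self [CompleteSpace E] {f : 𝕜 → E} {a : 𝕜}
    (hf : AnalyticAt 𝕜 f a) (j : ℕ) :
    j.factorial • (swap dslope a)^[j] f a = iteratedDeriv j f a := by
  obtain ⟨p, r, hp⟩ := hf
  have coeff_eq : p.coeff j = (swap dslope a)^[j] f a := by
    have h := (hp.hasFPowerSeriesAt.has_fpower_series_iterate_dslope_fslope j).coeff_zero 1
    rwa [← FormalMultilinearSeries.coeff, FormalMultilinearSeries.coeff_iterate_fslope,
      zero_add] at h
  rw [← coeff_eq, iteratedDeriv_eq_iteratedFDeriv]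
  exact hp.factorial_smul 1 j

theorem eq_sum_iteratedDeriv_add_pow_smul_iterate_dslope [CompleteSpace E] [CharZero 𝕜]
    {f : 𝕜 → E} {a : 𝕜} (hf : AnalyticAt 𝕜 f a) (b : 𝕜) (m : ℕ) :
    f b = ∑ j ∈ range m, ((b - a) ^ j / j.factorial) • iteratedDeriv j f a +
      (b - a) ^ m • (swap dslope a)^[m] f b := by
  have taylor_term (j : ℕ) : ((b - a) ^ j / j.factorial) • iteratedDeriv j f a =
      (b - a) ^ j • (swap dslope a)^[j] f a := by
    have hj : (j.factorial : 𝕜) ≠ 0 := Nat.cast_ne_zero.2 j.factorial_ne_zero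
    rw [← factorial_smul_iterate_dslope_self hf, ← Nat.cast_smul_eq_nsmul 𝕜, smul_smul,
      div_mul_cancel₀ _ hj]
  simp only [taylor_term]
  exact eq_sum_add_pow_smul_iterate_dslope f a b m

theorem differentiableOn_iterate_dslope_iff {F : Type*} [NormedAddCommGroup F] [NormedSpace ℂ F]
    [CompleteSpace F] {f : ℂ → F} {s : Set ℂ} {a : ℂ} (ha : s ∈ 𝓝 a) (m : ℕ) :
    DifferentiableOn ℂ ((swap dslope a)^[m] f) s ↔ DifferentiableOn ℂ f s := by
  induction m with
  | zero => rfl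
  | succ m ih =>
    rw [iterate_succ_apply']
    exact (Complex.differentiableOn_dslope ha).trans ih

end IterateDSlope

section TwoPointExpansion

variable {K : Type*} [Field K] {u v : K}

theorem sum_choose_mul_zpow_mul_pow (hu : u ≠ 0) (p : ℕ) :
    ∑ n ∈ range (p + 1), (-1) ^ n * (p.choose n : K) * u ^ (-(n : ℤ) - 1) * v ^ n =
      (u - v) ^ p / u ^ (p + 1) := by
  rw [show u - v = -v + u by ring, add_pow, sum_div]
  refine sum_congr rfl fun n hn ↦ ?_
  obtain ⟨q, rfl⟩ := Nat.exists_eq_add_of_le (mem_range_succ_iff.1 hn)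
  rw [Nat.add_sub_cancel_left, neg_pow v, zpow_sub₀ hu, zpow_neg, zpow_natCast, zpow_one]
  field_simp
  ring

/-- The coefficient of `u ^ (-n - 1) * v ^ n` in the two-point expansion of the principal part
`(∑ j ∈ range m, a j * u ^ j) / u ^ m`, where `d = u - v`. The index `p` stands for the pole
`u ^ (-p - 1)`, whose coefficient is `a (m - 1 - p)`. -/
def twoPointCoeff (a : ℕ → K) (d : K) (m n : ℕ) : K :=
  (-1) ^ n * ∑ p ∈ Ico n m, (p.choose n : K) * a (m - 1 - p) / d ^ p

theorem sum_twoPointCoeff_mul_eq_sum_div_pow (hu : u ≠ 0) (huv : u ≠ v) (a : ℕ → K) (m : ℕ) :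
    ∑ n ∈ range m, twoPointCoeff a (u - v) m n * u ^ (-(n : ℤ) - 1) * v ^ n =
      (∑ j ∈ range m, a j * u ^ j) / u ^ m := by
  calc
    _ = ∑ n ∈ Ico 0 m, ∑ p ∈ Ico n m, a (m - 1 - p) / (u - v) ^ p *
          ((-1) ^ n * (p.choose n : K) * u ^ (-(n : ℤ) - 1) * v ^ n) := by
      simp only [twoPointCoeff, range_eq_Ico, mul_sum, sum_mul]
      exact sum_congr rfl fun n _ ↦ sum_congr rfl fun p _ ↦ by ring
    _ = ∑ p ∈ range m, a (m - 1 - p) / (u - v) ^ p * ((u - v) ^ p / u ^ (p + 1)) := by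
      rw [sum_Ico_Ico_comm]
      simp only [← mul_sum, ← range_eq_Ico, sum_choose_mul_zpow_mul_pow hu]
    _ = ∑ p ∈ range m, a (m - 1 - p) * u ^ (m - 1 - p) / u ^ m := by
      refine sum_congr rfl fun p hp ↦ ?_
      obtain ⟨q, rfl⟩ := Nat.exists_eq_add_of_lt (mem_range.1 hp)
      rw [div_mul_div_cancel₀ (pow_ne_zero p (sub_ne_zero.2 huv)),
        show p + q + 1 - 1 - p = q by lia, add_right_comm, pow_add u (p + 1),
        mul_div_mul_right _ _ (pow_ne_zero q hu)]
    _ = (∑ j ∈ range m, a j * u ^ j) / u ^ m := by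
      rw [sum_range_reflect (fun j ↦ a j * u ^ j / u ^ m), sum_div]

end TwoPointExpansion

theorem taylorLaurentE_eq_twoPointCoeff (g : ℂ → ℂ) (z1 z2 : ℂ) (m n : ℕ) :
    taylorLaurentE g z1 z2 m n =
      twoPointCoeff (fun j ↦ iteratedDeriv j g z1 / j.factorial) (z2 - z1) m n := by
  rw [taylorLaurentE, twoPointCoeff, sum_Ico_eq_sum_range, mul_sum, mul_sum]
  refine sum_congr rfl fun k _ ↦ ?_
  rw [show m - 1 - (n + k) = m - n - k - 1 by lia, Nat.cast_add_choose]
  field_simp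

theorem sum_taylorLaurentE_eq_taylor_div_pow (g : ℂ → ℂ) {z1 z2 w : ℂ} (h12 : z1 ≠ z2)
    (hw : w ≠ z1) (m : ℕ) :
    ∑ n ∈ range m, taylorLaurentE g z1 z2 m n * (w - z1) ^ (-(n : ℤ) - 1) * (w - z2) ^ n =
      (∑ j ∈ range m, (w - z1) ^ j / j.factorial * iteratedDeriv j g z1) / (w - z1) ^ m := by
  have huv : w - z1 ≠ w - z2 := fun h ↦ h12 (sub_right_injective h)
  simp only [taylorLaurentE_eq_twoPointCoeff, div_mul_comm _ _ (iteratedDeriv _ g z1)]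
  rw [← sum_twoPointCoeff_mul_eq_sum_div_pow (sub_ne_zero.2 hw) huv, sub_sub_sub_cancel_left]

theorem taylorLaurent_removable_general {Ω : Set ℂ} {g : ℂ → ℂ} {z1 z2 : ℂ} (hΩ : Ω ∈ 𝓝 z1)
    (hg : DifferentiableOn ℂ g Ω) (h12 : z1 ≠ z2) (m : ℕ) :
    ∃ G : ℂ → ℂ, DifferentiableOn ℂ G Ω ∧ ∀ w ≠ z1, G w = g w / (w - z1) ^ m -
      ∑ n ∈ range m, taylorLaurentE g z1 z2 m n * (w - z1) ^ (-(n : ℤ) - 1) * (w - z2) ^ n := by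
  refine ⟨(swap dslope z1)^[m] g, (differentiableOn_iterate_dslope_iff hΩ m).2 hg, fun w hw ↦ ?_⟩
  have taylor := eq_sum_iteratedDeriv_add_pow_smul_iterate_dslope (hg.analyticAt hΩ) w m
  simp only [smul_eq_mul] at taylor
  rw [sum_taylorLaurentE_eq_taylor_div_pow g h12 hw, ← sub_div,
    eq_div_iff (pow_ne_zero m (sub_ne_zero.2 hw))]
  linear_combination -taylor

/-- Subtracting the singular part (built from the `e_n` coefficients) of the two-point
Taylor–Laurent expansion of `f = g/(z−z1)^m` leaves a function whose singularity at `z1`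
is removable: it extends analytically to all of `Ω`. -/
theorem taylorLaurent_removable
    (Ω : Set ℂ) (hΩ : IsOpen Ω) (g : ℂ → ℂ) (hg : DifferentiableOn ℂ g Ω)
    (z1 z2 : ℂ) (hz1 : z1 ∈ Ω) (hz2 : z2 ∈ Ω) (h12 : z1 ≠ z2)
    (m : ℕ) (hm : 1 ≤ m)
    (f : ℂ → ℂ) (hfdef : ∀ w, f w = g w / (w - z1) ^ m)
    (G : ℂ → ℂ)
    (hGdef : ∀ w, G w = f w - ∑ n ∈ Finset.range m,
      taylorLaurentE g z1 z2 m n * (w - z1) ^ (-(n : ℤ) - 1) * (w - z2) ^ n) :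
    ∃ G' : ℂ → ℂ, DifferentiableOn ℂ G' Ω ∧ ∀ w ∈ Ω \ {z1}, G' w = G w := by
  obtain ⟨G', hG', hG'_eq⟩ := taylorLaurent_removable_general (hΩ.mem_nhds hz1) hg h12 m
  exact ⟨G', hG', fun w hw ↦ by rw [hG'_eq w hw.2, hGdef, hfdef]⟩
end
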